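/- arXiv:1706.07175 — 4 statements merged into one kernel-verified Lean document; each statement's English description precedes it below -/
import Mathlib

section
/- Let q be a norm on ℙ(ℂ^N) that is spectral admissible with respect to a spectral, submultiplicative norm q_σ. Then the limit lim_{k→∞} m_k(q)/k exists and equals m(q_σ); in particular the asymptotic exponent satisfies m*(q) = m(q_σ), and m(q_σ) ≤ m(q). -/
open MvPolynomial Filter
open scoped ENNReal

/-- The partial-derivative operator `D^α = ∂^{|α|}/∂x₁^{α₁}⋯∂x_N^{α_N}` on
polynomials in `N` variables. -/
noncomputable def mvDeriv {N : ℕ} (α : Fin N → ℕ) (P : MvPolynomial (Fin N) ℂ) :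
    MvPolynomial (Fin N) ℂ :=
  (List.ofFn fun j : Fin N =>
      (fun Q : MvPolynomial (Fin N) ℂ => MvPolynomial.pderiv j Q)^[α j]).foldl
    (fun Q f => f Q) P

/-- `q` is a norm on the complex vector space `ℙ(ℂ^N)` of polynomials. -/
structure IsPolyNorm {N : ℕ} (q : MvPolynomial (Fin N) ℂ → ℝ) : Prop where
  nonneg : ∀ P, 0 ≤ q P
  definite : ∀ P, q P = 0 → P = 0
  triangle : ∀ P Q, q (P + Q) ≤ q P + q Q
  homog : ∀ (c : ℂ) (P), q (c • P) = ‖c‖ * q P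

/-- The Markov exponent `m(α, q) ∈ [0,∞]`: the infimum of the set of `s > 0` such that
`q(D^α P) ≤ M (deg P)^s q(P)` holds for some `M > 0` and all `P` with `deg P ≥ 1`
(`sInf ∅ = ∞` in `ℝ≥0∞`). -/
noncomputable def mExp {N : ℕ} (q : MvPolynomial (Fin N) ℂ → ℝ) (α : Fin N → ℕ) : ℝ≥0∞ :=
  sInf (ENNReal.ofReal '' {s : ℝ | 0 < s ∧ ∃ M : ℝ, 0 < M ∧
    ∀ P : MvPolynomial (Fin N) ℂ, 1 ≤ P.totalDegree →
      q (mvDeriv α P) ≤ M * (P.totalDegree : ℝ) ^ s * q P})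

/-- `m_k(q) = max {m(α,q) : |α| = k}`. -/
noncomputable def mkExp {N : ℕ} (q : MvPolynomial (Fin N) ℂ → ℝ) (k : ℕ) : ℝ≥0∞ :=
  ⨆ α ∈ {α : Fin N → ℕ | ∑ j, α j = k}, mExp q α

/-- The asymptotic Markov exponent `m*(q) = limsup_k m_k(q)/k`. -/
noncomputable def mStar {N : ℕ} (q : MvPolynomial (Fin N) ℂ → ℝ) : ℝ≥0∞ :=
  Filter.atTop.limsup fun k : ℕ => mkExp q k / (k : ℝ≥0∞)

/-!
For a derivation `D` of a commutative ring, expanding `D^k` applied to `(g - f)^k` with `f` treated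
as a constant, and then putting `g = f`, gives
`∑ i ≤ k, (k choose i) (-f)^(k-i) D^k (f^i) = k! (D f)^k`.
If `p` is spectral and submultiplicative, this identity turns a Markov inequality for `D^k` with
exponent `s` into one for `D` with exponent `s / k`. Hence `k m(p) ≤ m_k(p)`, and since
`m_k(p) ≤ k m(p)` for every norm, `m_k(p) = k m(p)`. Passing from `p` to a spectral admissible `q`
changes every exponent by at most `a + b`, which is negligible after division by `k`.
-/

section Derivation

variable {R A : Type*} [CommSemiring R] [CommRing A] [Algebra R A] (D : Derivation R A A)

/-- The value at `g = f` of `D^n` applied to `(g - f)^k`, where `D` differentiates `g` and treats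
`f` as a constant. -/
def iteratedPowSub (f : A) (k n : ℕ) : A :=
  ∑ i ∈ Finset.range (k + 1), (k.choose i : A) * ((-f) ^ (k - i) * D^[n] (f ^ i))

theorem iteratedPowSub_zero_right (f : A) {k : ℕ} (hk : k ≠ 0) : iteratedPowSub D f k 0 = 0 := by
  have hbinom := add_pow f (-f) k
  rw [add_neg_cancel, zero_pow hk] at hbinom
  rw [iteratedPowSub, hbinom]
  exact Finset.sum_congr rfl fun i _ => by rw [Function.iterate_zero_apply]; ring

/-- The correction term is what the product rule yields from the factors `(-f) ^ (k + 1 - i)`. -/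
theorem iteratedPowSub_succ_succ (f : A) (k n : ℕ) :
    iteratedPowSub D f (k + 1) (n + 1) =
      D (iteratedPowSub D f (k + 1) n) + (k + 1) * D f * iteratedPowSub D f k n := by
  have hcorr : (k + 1) * D f * iteratedPowSub D f k n =
      ∑ i ∈ Finset.range (k + 1 + 1), ((k + 1).choose i : A) *
        (((k + 1 - i : ℕ) : A) * ((-f) ^ (k + 1 - i - 1) * D f * D^[n] (f ^ i))) := by
    rw [Finset.sum_range_succ, iteratedPowSub, Finset.mul_sum]
    simp only [Nat.sub_self, Nat.cast_zero, zero_mul, mul_zero, add_zero]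
    refine Finset.sum_congr rfl fun i _ => ?_
    have hchoose : (k.choose i : A) * (k + 1) = (k + 1).choose i * ((k + 1 - i : ℕ) : A) :=
      mod_cast congrArg (Nat.cast : ℕ → A) (Nat.choose_mul_succ_eq k i)
    rw [show k + 1 - i - 1 = k - i by omega]
    linear_combination ((-f) ^ (k - i) * D f * D^[n] (f ^ i)) * hchoose
  rw [hcorr, iteratedPowSub, iteratedPowSub, map_sum, ← Finset.sum_add_distrib]
  refine Finset.sum_congr rfl fun i _ => ?_
  simp only [Derivation.leibniz, Derivation.leibniz_pow, Derivation.map_natCast, map_neg,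
    Function.iterate_succ_apply', smul_eq_mul, nsmul_eq_mul]
  ring

theorem iteratedPowSub_of_lt (f : A) {k n : ℕ} (h : n < k) : iteratedPowSub D f k n = 0 := by
  induction n generalizing k with
  | zero => exact iteratedPowSub_zero_right D f h.ne'
  | succ n ih =>
    obtain ⟨k, rfl⟩ := Nat.exists_eq_add_one_of_ne_zero (Nat.ne_zero_of_lt h)
    rw [iteratedPowSub_succ_succ, ih (by omega), ih (by omega), map_zero, mul_zero, add_zero]

theorem iteratedPowSub_self (f : A) (k : ℕ) :
    iteratedPowSub D f k k = (k.factorial : A) * D f ^ k := by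
  induction k with
  | zero => simp [iteratedPowSub]
  | succ k ih =>
    rw [iteratedPowSub_succ_succ, iteratedPowSub_of_lt D f k.lt_succ_self, map_zero, zero_add, ih,
      Nat.factorial_succ]
    push_cast
    ring

end Derivation

section PartialDerivatives

variable {σ R : Type*} [CommSemiring R]

theorem totalDegree_pderiv_le (j : σ) (P : MvPolynomial σ R) :
    (pderiv j P).totalDegree ≤ P.totalDegree := by
  refine Finset.sup_le fun m hm => ?_
  have hmem : m + Finsupp.single j 1 ∈ P.support := by
    rw [mem_support_iff, coeff_pderiv] at hm
    exact mem_support_iff.mpr (left_ne_zero_of_mul hm)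
  refine le_trans ?_ (le_totalDegree hmem)
  rw [Finsupp.sum_add_index' (fun _ => rfl) (fun _ _ _ => rfl)]
  exact Nat.le_add_right _ _

theorem pderiv_pderiv_comm (i j : σ) (P : MvPolynomial σ R) :
    pderiv i (pderiv j P) = pderiv j (pderiv i P) := by
  classical
  rcases eq_or_ne i j with rfl | hij
  · rfl
  · ext m
    simp only [coeff_pderiv, Finsupp.add_apply, Finsupp.single_eq_of_ne hij,
      Finsupp.single_eq_of_ne hij.symm, add_zero, add_right_comm m, mul_right_comm]

instance : RightCommutative fun (P : MvPolynomial σ R) (j : σ) => pderiv j P where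
  right_comm P i j := pderiv_pderiv_comm j i P

end PartialDerivatives

theorem multiset_foldl_nsmul_singleton {α β : Type*} (f : β → α → β) [RightCommutative f]
    (a : α) (n : ℕ) (b : β) : (n • ({a} : Multiset α)).foldl f b = (fun b => f b a)^[n] b := by
  induction n generalizing b with
  | zero => rw [zero_smul, Multiset.foldl_zero, Function.iterate_zero_apply]
  | succ n ih =>
    rw [succ_nsmul', Multiset.singleton_add, Multiset.foldl_cons, ih, Function.iterate_succ_apply]

section MultiIndex

variable {N : ℕ}

theorem mvDeriv_eq_multiset_foldl (α : Fin N → ℕ) (P : MvPolynomial (Fin N) ℂ) :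
    mvDeriv α P = (∑ j, α j • ({j} : Multiset (Fin N))).foldl (fun Q j => pderiv j Q) P := by
  have hlist (l : List (Fin N)) : (l.map fun j => (pderiv (R := ℂ) j)^[α j]).foldl
      (fun Q f => f Q) P =
        (l.map fun j => α j • ({j} : Multiset (Fin N))).sum.foldl (fun Q j => pderiv j Q) P := by
    induction l generalizing P with
    | nil => rfl
    | cons j l ih =>
      rw [List.map_cons, List.map_cons, List.foldl_cons, List.sum_cons, Multiset.foldl_add,
        multiset_foldl_nsmul_singleton, ih]
  rw [← List.sum_ofFn, List.ofFn_eq_map, ← hlist, mvDeriv, List.ofFn_eq_map]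

theorem mvDeriv_zero (P : MvPolynomial (Fin N) ℂ) : mvDeriv 0 P = P := by
  simp [mvDeriv_eq_multiset_foldl]

theorem mvDeriv_add (α β : Fin N → ℕ) (P : MvPolynomial (Fin N) ℂ) :
    mvDeriv (α + β) P = mvDeriv β (mvDeriv α P) := by
  simp only [mvDeriv_eq_multiset_foldl, Pi.add_apply, add_smul, Finset.sum_add_distrib,
    Multiset.foldl_add]

theorem mvDeriv_single (j : Fin N) (k : ℕ) (P : MvPolynomial (Fin N) ℂ) :
    mvDeriv (Pi.single j k) P = (pderiv j)^[k] P := by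
  have hsum : ∑ i, (Pi.single j k : Fin N → ℕ) i • ({i} : Multiset (Fin N)) = k • {j} := by
    rw [Finset.sum_eq_single j (fun i _ hi => by rw [Pi.single_eq_of_ne hi, zero_smul])
      (fun hj => absurd (Finset.mem_univ j) hj), Pi.single_eq_same]
  rw [mvDeriv_eq_multiset_foldl, hsum, multiset_foldl_nsmul_singleton]

theorem totalDegree_mvDeriv_le (α : Fin N → ℕ) (P : MvPolynomial (Fin N) ℂ) :
    (mvDeriv α P).totalDegree ≤ P.totalDegree := by
  rw [mvDeriv_eq_multiset_foldl]
  exact Multiset.foldl_induction' (fun Q j => pderiv j Q) P (fun _ => True)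
    (fun Q => Q.totalDegree ≤ P.totalDegree) _
    (fun j Q _ hQ => (totalDegree_pderiv_le j Q).trans hQ) le_rfl fun _ _ => trivial

theorem mvDeriv_C (α : Fin N → ℕ) (c : ℂ) : mvDeriv α (C c) = C c ∨ mvDeriv α (C c) = 0 := by
  rw [mvDeriv_eq_multiset_foldl]
  refine Multiset.foldl_induction' _ _ (fun _ => True) (fun Q => Q = C c ∨ Q = 0) _ ?_
    (Or.inl rfl) fun _ _ => trivial
  rintro j _ - (rfl | rfl)
  · exact Or.inr pderiv_C
  · exact Or.inr (map_zero _)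

theorem exists_eq_add_single_of_sum_eq_succ {ι : Type*} [Fintype ι] [DecidableEq ι] {α : ι → ℕ}
    {k : ℕ} (h : ∑ j, α j = k + 1) : ∃ (β : ι → ℕ) (j : ι),
    ∑ i, β i = k ∧ α = β + Pi.single j 1 := by
  obtain ⟨j, -, hj⟩ : ∃ j ∈ Finset.univ, α j ≠ 0 :=
    Finset.exists_ne_zero_of_sum_ne_zero (h ▸ k.succ_ne_zero)
  have hle : Pi.single j 1 ≤ α := by
    intro i
    rcases eq_or_ne i j with rfl | hij
    · rw [Pi.single_eq_same]
      exact Nat.one_le_iff_ne_zero.mpr hj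
    · rw [Pi.single_eq_of_ne hij]
      exact Nat.zero_le _
  obtain ⟨β, rfl⟩ := le_iff_exists_add'.mp hle
  refine ⟨β, j, ?_, rfl⟩
  simpa [Finset.sum_add_distrib] using h

end MultiIndex

section MarkovBound

variable {σ R : Type*} [CommSemiring R] {p q r : MvPolynomial σ R → ℝ}
  {F G : MvPolynomial σ R → MvPolynomial σ R} {s t : ℝ}

/-- A Markov type inequality `p (F P) ≤ M (deg P)^s q(P)` with exponent `s`. Instead of `deg P` it
uses any `n ≥ 1` bounding the degree, so that it also covers constants and can be composed. For
`F = id` it is one half of spectral admissibility. -/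
def MarkovBound (p q : MvPolynomial σ R → ℝ) (F : MvPolynomial σ R → MvPolynomial σ R) (s : ℝ) :
    Prop :=
  ∃ M : ℝ, 0 < M ∧ ∀ (P : MvPolynomial σ R) (n : ℕ), 1 ≤ n → P.totalDegree ≤ n →
    p (F P) ≤ M * (n : ℝ) ^ s * q P

namespace MarkovBound

theorem of_one_le_totalDegree (hq : ∀ P, 0 ≤ q P) {M K : ℝ} (hM : 0 < M) (hs : 0 ≤ s)
    (h : ∀ P : MvPolynomial σ R, 1 ≤ P.totalDegree →
      p (F P) ≤ M * (P.totalDegree : ℝ) ^ s * q P)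
    (hconst : ∀ c : R, p (F (C c)) ≤ K * q (C c)) : MarkovBound p q F s := by
  have hmax : 0 < max M K := lt_max_of_lt_left hM
  refine ⟨max M K, hmax, fun P n hn hP => ?_⟩
  have hqP := hq P
  rcases Nat.eq_zero_or_pos P.totalDegree with hdeg | hdeg
  · obtain ⟨c, rfl⟩ : ∃ c, P = C c := ⟨_, totalDegree_eq_zero_iff_eq_C.mp hdeg⟩
    have hns : 1 ≤ (n : ℝ) ^ s := Real.one_le_rpow (mod_cast hn) hs
    calc p (F (C c)) ≤ K * q (C c) := hconst c
      _ ≤ max M K * 1 * q (C c) := by rw [mul_one]; gcongr; exact le_max_right M K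
      _ ≤ max M K * (n : ℝ) ^ s * q (C c) := by gcongr
  · refine (h P hdeg).trans ?_
    gcongr
    exact le_max_left M K

theorem mono (hq : ∀ P, 0 ≤ q P) (hst : s ≤ t) (h : MarkovBound p q F s) :
    MarkovBound p q F t := by
  obtain ⟨M, hM, hbound⟩ := h
  refine ⟨M, hM, fun P n hn hP => (hbound P n hn hP).trans ?_⟩
  have hqP := hq P
  have hn' : (1 : ℝ) ≤ n := mod_cast hn
  gcongr

theorem comp (hG : MarkovBound r p G t) (hF : MarkovBound p q F s)
    (hdeg : ∀ P, (F P).totalDegree ≤ P.totalDegree) : MarkovBound r q (G ∘ F) (s + t) := by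
  obtain ⟨K, hK, hG⟩ := hG
  obtain ⟨M, hM, hF⟩ := hF
  refine ⟨K * M, mul_pos hK hM, fun P n hn hP => ?_⟩
  have hn' : (0 : ℝ) < n := mod_cast hn
  calc r (G (F P)) ≤ K * (n : ℝ) ^ t * p (F P) := hG _ n hn ((hdeg P).trans hP)
    _ ≤ K * (n : ℝ) ^ t * (M * (n : ℝ) ^ s * q P) := by gcongr; exact hF P n hn hP
    _ = K * M * (n : ℝ) ^ (s + t) * q P := by rw [Real.rpow_add hn']; ring

end MarkovBound

end MarkovBound

namespace IsPolyNorm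

variable {N : ℕ} {p q : MvPolynomial (Fin N) ℂ → ℝ}

theorem map_zero (hq : IsPolyNorm q) : q 0 = 0 := by
  simpa using hq.homog 0 0

theorem map_neg (hq : IsPolyNorm q) (P : MvPolynomial (Fin N) ℂ) : q (-P) = q P := by
  simpa using hq.homog (-1) P

theorem map_C_mul (hq : IsPolyNorm q) (c : ℂ) (P : MvPolynomial (Fin N) ℂ) :
    q (C c * P) = ‖c‖ * q P := by
  rw [← smul_eq_C_mul, hq.homog]

theorem map_natCast_mul (hq : IsPolyNorm q) (n : ℕ) (P : MvPolynomial (Fin N) ℂ) :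
    q (n * P) = n * q P := by
  simpa using hq.map_C_mul n P

theorem map_sum_le (hq : IsPolyNorm q) {ι : Type*} (s : Finset ι)
    (f : ι → MvPolynomial (Fin N) ℂ) : q (∑ i ∈ s, f i) ≤ ∑ i ∈ s, q (f i) :=
  Finset.le_sum_of_subadditive q hq.map_zero.le hq.triangle s f

theorem map_one_ne_zero (hq : IsPolyNorm q) : q 1 ≠ 0 := fun h => one_ne_zero (hq.definite 1 h)

theorem markovBound_id (hp : IsPolyNorm p) (hq : IsPolyNorm q) {A a : ℝ} (hA : 0 < A)
    (ha : 0 ≤ a) (h : ∀ P : MvPolynomial (Fin N) ℂ, 1 ≤ P.totalDegree →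
      p P ≤ A * (P.totalDegree : ℝ) ^ a * q P) : MarkovBound p q id a := by
  refine .of_one_le_totalDegree (K := p 1 / q 1) hq.nonneg hA ha h fun c => le_of_eq ?_
  have hpc := hp.map_C_mul c 1
  have hqc := hq.map_C_mul c 1
  rw [mul_one] at hpc hqc
  have hq1 := hq.map_one_ne_zero
  rw [id, hpc, hqc]
  field_simp

end IsPolyNorm

section MarkovExponent

variable {N : ℕ} {p q : MvPolynomial (Fin N) ℂ → ℝ}

theorem mExp_eq_sInf_markovBound (hq : IsPolyNorm q) (α : Fin N → ℕ) :
    mExp q α = sInf (ENNReal.ofReal '' {s : ℝ | 0 < s ∧ MarkovBound q q (mvDeriv α) s}) := by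
  rw [mExp]
  congr! 4 with s
  refine and_congr_right fun hs => ⟨fun ⟨M, hM, h⟩ => ?_, fun ⟨M, hM, h⟩ =>
    ⟨M, hM, fun P hP => h P _ hP le_rfl⟩⟩
  refine .of_one_le_totalDegree (K := 1) hq.nonneg hM hs.le h fun c => ?_
  rw [one_mul]
  rcases mvDeriv_C α c with hc | hc
  · rw [hc]
  · rw [hc, hq.map_zero]
    exact hq.nonneg _

theorem MarkovBound.mExp_le (hq : IsPolyNorm q) {α : Fin N → ℕ} {s : ℝ}
    (h : MarkovBound q q (mvDeriv α) s) : mExp q α ≤ ENNReal.ofReal s := by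
  refine ENNReal.le_of_forall_pos_le_add fun ε hε _ => ?_
  have hε' : (0 : ℝ) < ε := hε
  have hpos : 0 < max s 0 + ε := add_pos_of_nonneg_of_pos (le_max_right s 0) hε'
  have hle : s ≤ max s 0 + ε := (le_max_left s 0).trans (le_add_of_nonneg_right hε'.le)
  calc mExp q α ≤ ENNReal.ofReal (max s 0 + ε) :=
        mExp_eq_sInf_markovBound hq α ▸ sInf_le ⟨_, ⟨hpos, h.mono hq.nonneg hle⟩, rfl⟩
    _ = ENNReal.ofReal s + ε := by
        rw [ENNReal.ofReal_add (le_max_right s 0) hε'.le, ENNReal.ofReal_max, ENNReal.ofReal_zero,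
          max_eq_left zero_le, ENNReal.ofReal_coe_nnreal]

theorem mExp_zero (hq : IsPolyNorm q) : mExp q 0 = 0 := by
  have hbound : MarkovBound q q (mvDeriv 0) 0 := ⟨1, one_pos, fun P n _ _ => by simp [mvDeriv_zero]⟩
  simpa using hbound.mExp_le hq

theorem mExp_add_le (hq : IsPolyNorm q) (α β : Fin N → ℕ) :
    mExp q (α + β) ≤ mExp q α + mExp q β := by
  rw [mExp_eq_sInf_markovBound hq α, mExp_eq_sInf_markovBound hq β, ENNReal.sInf_add]
  simp only [ENNReal.add_sInf]
  refine le_iInf₂ fun _ ⟨s, ⟨_, hα⟩, hs⟩ => le_iInf₂ fun _ ⟨t, ⟨_, hβ⟩, ht⟩ => ?_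
  have hcomp : MarkovBound q q (mvDeriv (α + β)) (s + t) := by
    rw [show mvDeriv (α + β) = mvDeriv β ∘ mvDeriv α from funext (mvDeriv_add α β)]
    exact hβ.comp hα (totalDegree_mvDeriv_le α)
  rw [← hs, ← ht]
  exact (hcomp.mExp_le hq).trans ENNReal.ofReal_add_le

theorem mExp_le_mExp_add (hp : IsPolyNorm p) (hq : IsPolyNorm q) {a b : ℝ}
    (hpq : MarkovBound p q id a) (hqp : MarkovBound q p id b) (α : Fin N → ℕ) :
    mExp q α ≤ mExp p α + ENNReal.ofReal (a + b) := by
  rw [mExp_eq_sInf_markovBound hp, ENNReal.sInf_add]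
  refine le_iInf₂ fun _ ⟨s, ⟨_, hs⟩, hsr⟩ => ?_
  have hbound : MarkovBound q q (mvDeriv α) (a + s + b) :=
    hqp.comp (hs.comp hpq fun _ => le_rfl) (totalDegree_mvDeriv_le α)
  rw [← hsr]
  refine (hbound.mExp_le hq).trans ?_
  rw [add_comm a, add_assoc]
  exact ENNReal.ofReal_add_le

theorem mExp_le_mkExp {α : Fin N → ℕ} {k : ℕ} (hα : ∑ j, α j = k) : mExp q α ≤ mkExp q k :=
  le_iSup₂ (f := fun α (_ : α ∈ {α : Fin N → ℕ | ∑ j, α j = k}) => mExp q α) α hα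

theorem mExp_single_le_mkExp (q : MvPolynomial (Fin N) ℂ → ℝ) (j : Fin N) (k : ℕ) :
    mExp q (Pi.single j k) ≤ mkExp q k :=
  mExp_le_mkExp (Fintype.sum_pi_single' j k)

theorem mkExp_zero (hq : IsPolyNorm q) : mkExp q 0 = 0 := by
  refine nonpos_iff_eq_zero.mp (iSup₂_le fun α hα => ?_)
  obtain rfl : α = 0 := funext fun j => Finset.sum_eq_zero_iff.mp hα j (Finset.mem_univ j)
  exact (mExp_zero hq).le

theorem mkExp_one (q : MvPolynomial (Fin N) ℂ → ℝ) :
    mkExp q 1 = ⨆ j, mExp q (Pi.single j 1) := by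
  refine (iSup₂_le fun α hα => ?_).antisymm (iSup_le fun j => mExp_single_le_mkExp q j 1)
  obtain ⟨β, j, hβ, rfl⟩ := exists_eq_add_single_of_sum_eq_succ (k := 0) hα
  obtain rfl : β = 0 := funext fun i => Finset.sum_eq_zero_iff.mp hβ i (Finset.mem_univ i)
  rw [zero_add]
  exact le_iSup (fun j => mExp q (Pi.single j 1)) j

theorem mkExp_succ_le (hq : IsPolyNorm q) (k : ℕ) : mkExp q (k + 1) ≤ mkExp q k + mkExp q 1 := by
  refine iSup₂_le fun α hα => ?_
  obtain ⟨β, j, hβ, rfl⟩ := exists_eq_add_single_of_sum_eq_succ hα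
  exact (mExp_add_le hq β _).trans (add_le_add (mExp_le_mkExp hβ) (mExp_single_le_mkExp q j 1))

theorem mkExp_le_natCast_mul (hq : IsPolyNorm q) (k : ℕ) : mkExp q k ≤ k * mkExp q 1 := by
  induction k with
  | zero => rw [mkExp_zero hq]; exact zero_le
  | succ k ih =>
    rw [Nat.cast_succ, add_mul, one_mul]
    exact (mkExp_succ_le hq k).trans (add_le_add_left ih _)

theorem mkExp_le_mkExp_add (hp : IsPolyNorm p) (hq : IsPolyNorm q) {a b : ℝ}
    (hpq : MarkovBound p q id a) (hqp : MarkovBound q p id b) (k : ℕ) :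
    mkExp q k ≤ mkExp p k + ENNReal.ofReal (a + b) :=
  iSup₂_le fun α hα => (mExp_le_mExp_add hp hq hpq hqp α).trans
    (add_le_add_left (mExp_le_mkExp hα) _)

end MarkovExponent

section Spectral

variable {N : ℕ} {p : MvPolynomial (Fin N) ℂ → ℝ}

/-- A norm on polynomials that is both spectral and submultiplicative. The case `n = 0` of the
spectral property is part of `IsSpectralNorm.map_pow`. -/
structure IsSpectralNorm (p : MvPolynomial (Fin N) ℂ → ℝ) : Prop extends IsPolyNorm p where
  map_pow_of_one_le : ∀ (P : MvPolynomial (Fin N) ℂ) (n : ℕ), 1 ≤ n → p (P ^ n) = p P ^ n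
  map_mul_le : ∀ P Q : MvPolynomial (Fin N) ℂ, p (P * Q) ≤ p P * p Q

namespace IsSpectralNorm

theorem map_one (hp : IsSpectralNorm p) : p 1 = 1 := by
  have hsq := hp.map_pow_of_one_le 1 2 one_le_two
  rw [one_pow, sq] at hsq
  exact (mul_eq_left₀ hp.map_one_ne_zero).mp hsq.symm

theorem map_pow (hp : IsSpectralNorm p) (P : MvPolynomial (Fin N) ℂ) (n : ℕ) :
    p (P ^ n) = p P ^ n := by
  rcases Nat.eq_zero_or_pos n with rfl | hn
  · rw [pow_zero, pow_zero, hp.map_one]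
  · exact hp.map_pow_of_one_le P n hn

variable (D : Derivation ℂ (MvPolynomial (Fin N) ℂ) (MvPolynomial (Fin N) ℂ))

theorem factorial_mul_map_derivation_pow_le (hp : IsSpectralNorm p) (P : MvPolynomial (Fin N) ℂ)
    (k : ℕ) : k.factorial * p (D P) ^ k ≤
      ∑ i ∈ Finset.range (k + 1), (k.choose i : ℝ) * (p P ^ (k - i) * p (D^[k] (P ^ i))) :=
  calc k.factorial * p (D P) ^ k = p (iteratedPowSub D P k k) := by
        rw [iteratedPowSub_self, hp.map_natCast_mul, hp.map_pow]
    _ ≤ ∑ i ∈ Finset.range (k + 1), p (k.choose i * ((-P) ^ (k - i) * D^[k] (P ^ i))) :=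
        hp.map_sum_le _ _
    _ ≤ _ := by
        refine Finset.sum_le_sum fun i _ => ?_
        rw [hp.map_natCast_mul, ← hp.map_neg P, ← hp.map_pow]
        gcongr
        exact hp.map_mul_le _ _

theorem map_derivation_pow_le (hp : IsSpectralNorm p) {P : MvPolynomial (Fin N) ℂ} {k : ℕ} {K : ℝ}
    (h : ∀ i ≤ k, p (D^[k] (P ^ i)) ≤ K * p P ^ i) : p (D P) ^ k ≤ 2 ^ k * K * p P ^ k := by
  have hpP := hp.nonneg P
  have hterm : ∀ i ∈ Finset.range (k + 1),
      p P ^ (k - i) * p (D^[k] (P ^ i)) ≤ K * p P ^ k := by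
    intro i hi
    have hik : i ≤ k := Finset.mem_range_succ_iff.mp hi
    calc p P ^ (k - i) * p (D^[k] (P ^ i)) ≤ p P ^ (k - i) * (K * p P ^ i) := by
          gcongr
          exact h i hik
      _ = K * p P ^ k := by rw [mul_left_comm, ← pow_add, Nat.sub_add_cancel hik]
  calc p (D P) ^ k ≤ k.factorial * p (D P) ^ k :=
        le_mul_of_one_le_left (pow_nonneg (hp.nonneg _) k) (mod_cast k.factorial_pos)
    _ ≤ _ := hp.factorial_mul_map_derivation_pow_le D P k
    _ ≤ ∑ i ∈ Finset.range (k + 1), (k.choose i : ℝ) * (K * p P ^ k) :=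
        Finset.sum_le_sum fun i hi => mul_le_mul_of_nonneg_left (hterm i hi) (Nat.cast_nonneg _)
    _ = 2 ^ k * K * p P ^ k := by
        rw [← Finset.sum_mul, ← Nat.cast_sum, Nat.sum_range_choose, Nat.cast_pow, Nat.cast_ofNat,
          mul_assoc]

theorem markovBound_of_iterate (hp : IsSpectralNorm p) {k : ℕ} (hk : k ≠ 0) {s : ℝ}
    (h : MarkovBound p p D^[k] s) : MarkovBound p p D (s / k) := by
  obtain ⟨M, hM, hbound⟩ := h
  set W : ℝ := 2 ^ k * M * (k : ℝ) ^ s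
  have hW : 0 < W := by positivity
  refine ⟨W ^ (k : ℝ)⁻¹, by positivity, fun P n hn hP => ?_⟩
  have hn0 : (0 : ℝ) ≤ n := n.cast_nonneg
  have hpP := hp.nonneg P
  have hiter : ∀ i ≤ k, p (D^[k] (P ^ i)) ≤ M * ((k * n : ℕ) : ℝ) ^ s * p P ^ i := by
    intro i hik
    rw [← hp.map_pow]
    exact hbound _ _ (Nat.mul_pos (Nat.pos_of_ne_zero hk) hn)
      ((totalDegree_pow P i).trans (Nat.mul_le_mul hik hP))
  refine le_of_pow_le_pow_left₀ hk (by positivity) ?_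
  calc p (D P) ^ k ≤ 2 ^ k * (M * ((k * n : ℕ) : ℝ) ^ s) * p P ^ k :=
        hp.map_derivation_pow_le D hiter
    _ = W * (n : ℝ) ^ s * p P ^ k := by
        rw [Nat.cast_mul, Real.mul_rpow k.cast_nonneg hn0]
        ring
    _ = (W ^ (k : ℝ)⁻¹ * (n : ℝ) ^ (s / k) * p P) ^ k := by
        rw [mul_pow, mul_pow, Real.rpow_inv_natCast_pow hW.le hk, ← Real.rpow_mul_natCast hn0,
          div_mul_cancel₀ s (Nat.cast_ne_zero.mpr hk)]

theorem natCast_mul_mExp_single_one_le (hp : IsSpectralNorm p) (j : Fin N) (k : ℕ) :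
    k * mExp p (Pi.single j 1) ≤ mExp p (Pi.single j k) := by
  rcases eq_or_ne k 0 with rfl | hk
  · rw [Nat.cast_zero, zero_mul]
    exact zero_le
  rw [mExp_eq_sInf_markovBound hp.toIsPolyNorm (Pi.single j k)]
  refine le_sInf fun _ ⟨s, ⟨_, hs⟩, hsr⟩ => ?_
  rw [show mvDeriv (Pi.single j k) = (pderiv j)^[k] from funext (mvDeriv_single j k)] at hs
  have hbound : MarkovBound p p (mvDeriv (Pi.single j 1)) (s / k) := by
    rw [show mvDeriv (Pi.single j 1) = pderiv j from funext (mvDeriv_single j 1)]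
    exact hp.markovBound_of_iterate _ hk hs
  calc k * mExp p (Pi.single j 1) ≤ k * ENNReal.ofReal (s / k) := by
        gcongr
        exact hbound.mExp_le hp.toIsPolyNorm
    _ = ENNReal.ofReal s := by
        rw [← ENNReal.ofReal_natCast, ← ENNReal.ofReal_mul k.cast_nonneg,
          mul_div_cancel₀ s (Nat.cast_ne_zero.mpr hk)]
    _ = _ := hsr

theorem mkExp_eq_natCast_mul (hp : IsSpectralNorm p) (k : ℕ) : mkExp p k = k * mkExp p 1 := by
  refine (mkExp_le_natCast_mul hp.toIsPolyNorm k).antisymm ?_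
  rw [mkExp_one, ENNReal.mul_iSup]
  exact iSup_le fun j =>
    (hp.natCast_mul_mExp_single_one_le j k).trans (mExp_single_le_mkExp p j k)

end IsSpectralNorm

end Spectral

theorem tendsto_div_natCast_of_le_add {u : ℕ → ℝ≥0∞} {m c : ℝ≥0∞} (hc : c ≠ ⊤)
    (hle : ∀ k, u k ≤ k * m + c) (hge : ∀ k, k * m ≤ u k + c) :
    Tendsto (fun k : ℕ => u k / k) atTop (nhds m) := by
  have hzero : Tendsto (fun k : ℕ => c / k) atTop (nhds 0) := by
    simpa using ENNReal.Tendsto.const_div ENNReal.tendsto_nat_nhds_top (Or.inr hc)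
  have hlower : Tendsto (fun k : ℕ => m - c / k) atTop (nhds m) := by
    simpa using ENNReal.Tendsto.sub tendsto_const_nhds hzero (Or.inr ENNReal.zero_ne_top)
  have hupper : Tendsto (fun k : ℕ => m + c / k) atTop (nhds m) := by
    simpa using tendsto_const_nhds.add hzero
  have hcancel {k : ℕ} (hk : k ≠ 0) : k * m / k = m := by
    rw [mul_comm, ENNReal.mul_div_cancel_right (Nat.cast_ne_zero.mpr hk) (ENNReal.natCast_ne_top k)]
  refine tendsto_of_tendsto_of_tendsto_of_le_of_le' hlower hupper ?_ ?_
  · filter_upwards [eventually_ne_atTop 0] with k hk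
    rw [tsub_le_iff_right, ← ENNReal.add_div, ← hcancel hk]
    exact ENNReal.div_le_div_right (hge k) _
  · filter_upwards [eventually_ne_atTop 0] with k hk
    rw [← hcancel hk, ← ENNReal.add_div]
    exact ENNReal.div_le_div_right (hle k) _

/-- If `q` is a norm on `ℙ(ℂ^N)` which is spectral admissible with respect
to a spectral, submultiplicative norm `q_σ`, then `lim_{k→∞} m_k(q)/k` exists and equals
`m(q_σ)`; in particular `m*(q) = m(q_σ)` and `m(q_σ) ≤ m(q)`. -/
theorem statement0 {N : ℕ} (q qσ : MvPolynomial (Fin N) ℂ → ℝ)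
    (hq : IsPolyNorm q) (hqσ : IsPolyNorm qσ)
    (hspec : ∀ (P : MvPolynomial (Fin N) ℂ) (n : ℕ), 1 ≤ n → qσ (P ^ n) = qσ P ^ n)
    (hsub : ∀ P Q : MvPolynomial (Fin N) ℂ, qσ (P * Q) ≤ qσ P * qσ Q)
    (A B a b : ℝ) (hA : 0 < A) (hB : 0 < B) (ha : 0 ≤ a) (hb : 0 ≤ b)
    (hup : ∀ P : MvPolynomial (Fin N) ℂ, 1 ≤ P.totalDegree →
      qσ P ≤ A * (P.totalDegree : ℝ) ^ a * q P)
    (hdown : ∀ P : MvPolynomial (Fin N) ℂ, 1 ≤ P.totalDegree →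
      q P ≤ B * (P.totalDegree : ℝ) ^ b * qσ P) :
    Tendsto (fun k : ℕ => mkExp q k / (k : ℝ≥0∞)) atTop (nhds (mkExp qσ 1)) ∧
      mStar q = mkExp qσ 1 ∧ mkExp qσ 1 ≤ mkExp q 1 := by
  have hσ : IsSpectralNorm qσ := ⟨hqσ, hspec, hsub⟩
  have hσ_le : MarkovBound qσ q id a := hqσ.markovBound_id hq hA ha hup
  have hq_le : MarkovBound q qσ id b := hq.markovBound_id hqσ hB hb hdown
  have hle (k : ℕ) : mkExp q k ≤ k * mkExp qσ 1 + ENNReal.ofReal (a + b) :=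
    hσ.mkExp_eq_natCast_mul k ▸ mkExp_le_mkExp_add hqσ hq hσ_le hq_le k
  have hge (k : ℕ) : k * mkExp qσ 1 ≤ mkExp q k + ENNReal.ofReal (b + a) :=
    hσ.mkExp_eq_natCast_mul k ▸ mkExp_le_mkExp_add hq hqσ hq_le hσ_le k
  have hlim : Tendsto (fun k : ℕ => mkExp q k / (k : ℝ≥0∞)) atTop (nhds (mkExp qσ 1)) :=
    tendsto_div_natCast_of_le_add ENNReal.ofReal_ne_top hle (add_comm b a ▸ hge)
  have hdiv (k : ℕ) : mkExp q k / k ≤ mkExp q 1 :=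
    ENNReal.div_le_of_le_mul' (mkExp_le_natCast_mul hq k)
  exact ⟨hlim, hlim.limsup_eq, le_of_tendsto' hlim hdiv⟩
end

section
/- Let q be a spectral, submultiplicative norm on ℙ(ℂ^N), fix j ∈ {1,…,N} and an integer k ≥ 1, and suppose there exist M > 0 and s ≥ 0 such that q(∂^k P/∂x_j^k) ≤ M (deg P)^s q(P) for every polynomial P with deg P ≥ 1. Then for every polynomial P with deg P ≥ 1, q(∂P/∂x_j)^k ≤ (2^k M / k!) (k · deg P)^s q(P)^k, and hence q(∂P/∂x_j) ≤ (2^k M / k!)^{1/k} (k · deg P)^{s/k} q(P). -/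
open MvPolynomial Filter
open scoped ENNReal

/-!
For a derivation `D` of a commutative ring, `D^n (a ^ n * b) ≡ n! * (D a) ^ n * b` modulo `a`.
Apply this to the derivation of `A[X]` acting on coefficients and to `C P - X`, whose `k`-th power
is expanded by the binomial theorem: evaluating at `X = P` kills the multiples of `C P - X` and
gives `k! (D P) ^ k = ∑ (-1) ^ i (k.choose i) P ^ i D^k (P ^ (k - i))`. Bounding each summand by
the `k`-th order Markov inequality for `P ^ (k - i)`, whose norm is `q P ^ (k - i)` and whose degree
is at most `k * deg P`, costs a factor `∑ k.choose i = 2 ^ k`.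
-/

section Derivation

variable {R A : Type*} [CommSemiring R] [CommRing A] [Algebra R A] (D : Derivation R A A)

lemma dvd_derivation_iterate_pow_mul_sub (a : A) (n : ℕ) (b : A) :
    a ∣ D^[n] (a ^ n * b) - n.factorial * D a ^ n * b := by
  induction n generalizing b with
  | zero => simp
  | succ n ih =>
    have leibniz : D (a ^ (n + 1) * b) = a ^ n * ((n + 1) * D a * b + a * D b) := by
      simp only [D.leibniz, D.leibniz_pow, smul_eq_mul, nsmul_eq_mul, Nat.add_sub_cancel]
      push_cast
      ring
    have factorial_split : ((n + 1).factorial : A) * D a ^ (n + 1) * b =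
        n.factorial * D a ^ n * ((n + 1) * D a * b + a * D b) -
          a * (n.factorial * D a ^ n * D b) := by
      rw [Nat.factorial_succ]
      push_cast
      ring
    rw [Function.iterate_succ_apply, leibniz, factorial_split, sub_sub_eq_add_sub,
      add_sub_right_comm]
    exact (ih _).add (dvd_mul_right _ _)

lemma derivation_iterate_mul_of_map_eq_zero {c : A} (hc : D c = 0) (n : ℕ) (x : A) :
    D^[n] (c * x) = c * D^[n] x :=
  Function.Commute.iterate_left (g := (c * ·)) (fun y ↦ by simp [hc]) n x

variable {D} in
lemma derivation_iterate_C_sub_X_pow {S : Type*} [CommSemiring S] [Algebra S A]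
    {E : Derivation S (Polynomial A) (Polynomial A)}
    (hC : ∀ x, E (.C x) = .C (D x)) (hX : E .X = 0) (a : A) (m k : ℕ) :
    E^[m] ((.C a - .X) ^ k) =
      ∑ i ∈ Finset.range (k + 1),
        ((-1) ^ i * k.choose i * .X ^ i : Polynomial A) * .C (D^[m] (a ^ (k - i))) := by
  have binomial : (.C a - .X) ^ k = ∑ i ∈ Finset.range (k + 1),
      ((-1) ^ i * k.choose i * .X ^ i : Polynomial A) * .C (a ^ (k - i)) := by
    rw [sub_eq_neg_add, add_pow]
    refine Finset.sum_congr rfl fun i _ ↦ ?_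
    rw [neg_pow, Polynomial.C_pow]
    ring
  have coeff_const (i : ℕ) : E ((-1) ^ i * k.choose i * .X ^ i) = 0 := by
    simp [E.leibniz, E.leibniz_pow, hX]
  have iterate_C (x : A) : E^[m] (.C x) = .C (D^[m] x) :=
    (Function.Semiconj.iterate_right (f := Polynomial.C) (fun y ↦ (hC y).symm) m x).symm
  rw [binomial, ← E.coeFn_coe, ← Module.End.pow_apply, map_sum]
  refine Finset.sum_congr rfl fun i _ ↦ ?_
  rw [Module.End.pow_apply, E.coeFn_coe, derivation_iterate_mul_of_map_eq_zero E (coeff_const i),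
    iterate_C]

lemma factorial_mul_derivation_pow_eq_sum (a : A) (k : ℕ) :
    k.factorial * D a ^ k =
      ∑ i ∈ Finset.range (k + 1), (-1) ^ i * k.choose i * (a ^ i * D^[k] (a ^ (k - i))) := by
  let _ : Differential A := ⟨D.restrictScalars ℤ⟩
  let E : Derivation ℤ (Polynomial A) (Polynomial A) := Differential.mapCoeffs
  have E_C (x : A) : E (.C x) = .C (D x) := Differential.mapCoeffs_C x
  have E_X : E .X = 0 := Differential.mapCoeffs_X
  have expansion := derivation_iterate_C_sub_X_pow E_C E_X a k k
  have dvd := dvd_derivation_iterate_pow_mul_sub E (.C a - .X) k 1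
  rw [mul_one, mul_one, expansion, map_sub, E_C, E_X, sub_zero] at dvd
  have eval_eq := Polynomial.eval_dvd (x := a) dvd
  rw [Polynomial.eval_sub, Polynomial.eval_C, Polynomial.eval_X, sub_self, zero_dvd_iff,
    Polynomial.eval_sub, sub_eq_zero] at eval_eq
  simpa [Polynomial.eval_finsetSum, mul_assoc, mul_comm (D^[k] _)] using eval_eq.symm

end Derivation

lemma le_rpow_mul_rpow_mul_of_pow_le {k : ℕ} (hk : k ≠ 0) {x y B d s : ℝ} (hy : 0 ≤ y)
    (hB : 0 ≤ B) (hd : 0 ≤ d) (h : x ^ k ≤ B * d ^ s * y ^ k) :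
    x ≤ B ^ ((1 : ℝ) / k) * d ^ (s / k) * y := by
  have hk' : (k : ℝ) ≠ 0 := by exact_mod_cast hk
  refine le_of_pow_le_pow_left₀ hk (by positivity) (h.trans_eq ?_)
  rw [mul_pow, mul_pow, ← Real.rpow_mul_natCast hB, ← Real.rpow_mul_natCast hd,
    div_mul_cancel₀ _ hk', div_mul_cancel₀ _ hk', Real.rpow_one]

section Seminorm

variable {𝕜 : Type*} [RCLike 𝕜]

section Ring

variable {A : Type*} [Ring A] [Algebra 𝕜 A] (q : Seminorm 𝕜 A)

lemma seminorm_natCast_mul (n : ℕ) (x : A) : q (n * x) = n * q x := by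
  rw [← nsmul_eq_mul, ← Nat.cast_smul_eq_nsmul 𝕜, map_smul_eq_mul, RCLike.norm_natCast]

lemma seminorm_neg_one_pow_mul (n : ℕ) (x : A) : q ((-1) ^ n * x) = q x := by
  rcases neg_one_pow_eq_or A n with h | h <;> simp [h]

variable {q}

lemma seminorm_pow_mul_le (hmul : ∀ x y, q (x * y) ≤ q x * q y) (a : A) (n : ℕ) (x : A) :
    q (a ^ n * x) ≤ q a ^ n * q x := by
  induction n with
  | zero => simp
  | succ n ih =>
    rw [pow_succ', mul_assoc, pow_succ', mul_assoc]
    exact (hmul _ _).trans (mul_le_mul_of_nonneg_left ih (apply_nonneg q a))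

end Ring

variable {R A : Type*} [CommSemiring R] [CommRing A] [Algebra 𝕜 A] [Algebra R A]
  {q : Seminorm 𝕜 A}

lemma seminorm_derivation_pow_le (hmul : ∀ x y, q (x * y) ≤ q x * q y) (D : Derivation R A A)
    (a : A) {k : ℕ} {B : ℝ} (h : ∀ m ≤ k, q (D^[k] (a ^ m)) ≤ B * q a ^ m) :
    q (D a ^ k) ≤ 2 ^ k * B / k.factorial * q a ^ k := by
  have summand_le : ∀ i ∈ Finset.range (k + 1),
      q ((-1) ^ i * k.choose i * (a ^ i * D^[k] (a ^ (k - i)))) ≤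
        k.choose i * (B * q a ^ k) := by
    intro i hi
    have hik : i ≤ k := Finset.mem_range_succ_iff.mp hi
    rw [mul_assoc, seminorm_neg_one_pow_mul, seminorm_natCast_mul]
    gcongr
    calc q (a ^ i * D^[k] (a ^ (k - i)))
        ≤ q a ^ i * q (D^[k] (a ^ (k - i))) := seminorm_pow_mul_le hmul a i _
      _ ≤ q a ^ i * (B * q a ^ (k - i)) := by gcongr; exact h _ (Nat.sub_le k i)
      _ = B * q a ^ k := by rw [mul_left_comm, pow_mul_pow_sub _ hik]
  have factorial_mul_le : k.factorial * q (D a ^ k) ≤ 2 ^ k * (B * q a ^ k) := by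
    calc k.factorial * q (D a ^ k)
        = q (∑ i ∈ Finset.range (k + 1),
            (-1) ^ i * k.choose i * (a ^ i * D^[k] (a ^ (k - i)))) := by
          rw [← seminorm_natCast_mul, factorial_mul_derivation_pow_eq_sum]
      _ ≤ ∑ i ∈ Finset.range (k + 1), k.choose i * (B * q a ^ k) :=
          (Finset.le_sum_of_subadditive q (map_zero q).le (map_add_le_add q) _ _).trans
            (Finset.sum_le_sum summand_le)
      _ = 2 ^ k * (B * q a ^ k) := by
          rw [← Finset.sum_mul, ← Nat.cast_sum, Nat.sum_range_choose]
          push_cast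
          rfl
  rw [div_mul_eq_mul_div, le_div_iff₀' (by positivity), mul_assoc]
  exact factorial_mul_le

theorem statement4_general (hmul : ∀ x y, q (x * y) ≤ q x * q y) (hpow : IsPowMul q)
    (D : Derivation R A A) {deg : A → ℕ}
    (hdeg : ∀ a n, deg (a ^ n) = n * deg a) {k : ℕ} (hk : 1 ≤ k) {M s : ℝ} (hM : 0 ≤ M)
    (hs : 0 ≤ s) (h : ∀ a, 1 ≤ deg a → q (D^[k] a) ≤ M * (deg a : ℝ) ^ s * q a)
    (a : A) (ha : 1 ≤ deg a) :
    q (D a) ^ k ≤ 2 ^ k * M / k.factorial * ((k * deg a : ℕ) : ℝ) ^ s * q a ^ k ∧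
      q (D a) ≤ (2 ^ k * M / k.factorial) ^ ((1 : ℝ) / k) *
        ((k * deg a : ℕ) : ℝ) ^ (s / k) * q a := by
  have iterate_pow_le : ∀ m ≤ k,
      q (D^[k] (a ^ m)) ≤ M * ((k * deg a : ℕ) : ℝ) ^ s * q a ^ m := by
    intro m hmk
    rcases Nat.eq_zero_or_pos m with rfl | hm
    · have iterate_one : D^[k] 1 = 0 := by
        rw [← Nat.sub_add_cancel hk, Function.iterate_succ_apply, D.map_one_eq_zero]
        exact iterate_map_zero D _
      rw [pow_zero, iterate_one, map_zero]
      positivity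
    · calc q (D^[k] (a ^ m))
          ≤ M * (deg (a ^ m) : ℝ) ^ s * q (a ^ m) :=
            h _ (hdeg a m ▸ Nat.mul_pos hm ha)
        _ ≤ M * ((k * deg a : ℕ) : ℝ) ^ s * q a ^ m := by
            rw [hdeg, hpow a hm]
            gcongr
  have pow_le : q (D a) ^ k ≤
      2 ^ k * M / k.factorial * ((k * deg a : ℕ) : ℝ) ^ s * q a ^ k := by
    rw [← hpow (D a) hk]
    exact (seminorm_derivation_pow_le hmul D a iterate_pow_le).trans_eq (by ring)
  exact ⟨pow_le, le_rpow_mul_rpow_mul_of_pow_le (Nat.one_le_iff_ne_zero.mp hk)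
    (apply_nonneg q a) (by positivity) (Nat.cast_nonneg _) pow_le⟩

end Seminorm

lemma totalDegree_pow_eq {σ R : Type*} [CommSemiring R] [NoZeroDivisors R]
    (P : MvPolynomial σ R) (n : ℕ) : (P ^ n).totalDegree = n * P.totalDegree := by
  rcases eq_or_ne P 0 with rfl | hP
  · cases n <;> simp
  induction n with
  | zero => simp
  | succ n ih =>
    rw [pow_succ, totalDegree_mul_of_isDomain (pow_ne_zero n hP) hP, ih, Nat.succ_mul]

/-- The seminorm underlying a polynomial norm, giving access to the seminorm API. -/
noncomputable def IsPolyNorm.seminorm {N : ℕ} {q : MvPolynomial (Fin N) ℂ → ℝ}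
    (hq : IsPolyNorm q) : Seminorm ℂ (MvPolynomial (Fin N) ℂ) :=
  Seminorm.of q hq.triangle hq.homog

/-- Let `q` be a spectral, submultiplicative norm on `ℙ(ℂ^N)`, `j` a fixed
variable and `k ≥ 1` an integer, and suppose `q(∂^k P/∂x_j^k) ≤ M (deg P)^s q(P)` for all `P`
with `deg P ≥ 1`. Then `q(∂P/∂x_j)^k ≤ (2^k M / k!) (k·deg P)^s q(P)^k`, and hence
`q(∂P/∂x_j) ≤ (2^k M / k!)^{1/k} (k·deg P)^{s/k} q(P)`. -/
theorem statement4 {N : ℕ} (q : MvPolynomial (Fin N) ℂ → ℝ) (hq : IsPolyNorm q)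
    (hspec : ∀ (P : MvPolynomial (Fin N) ℂ) (n : ℕ), 1 ≤ n → q (P ^ n) = q P ^ n)
    (hsub : ∀ P Q : MvPolynomial (Fin N) ℂ, q (P * Q) ≤ q P * q Q)
    (j : Fin N) (k : ℕ) (hk : 1 ≤ k) (M s : ℝ) (hM : 0 < M) (hs : 0 ≤ s)
    (h : ∀ P : MvPolynomial (Fin N) ℂ, 1 ≤ P.totalDegree →
      q ((fun Q : MvPolynomial (Fin N) ℂ => MvPolynomial.pderiv j Q)^[k] P) ≤
        M * (P.totalDegree : ℝ) ^ s * q P) :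
    ∀ P : MvPolynomial (Fin N) ℂ, 1 ≤ P.totalDegree →
      q (MvPolynomial.pderiv j P) ^ k ≤
          2 ^ k * M / (k.factorial : ℝ) * ((k * P.totalDegree : ℕ) : ℝ) ^ s * q P ^ k ∧
        q (MvPolynomial.pderiv j P) ≤
          (2 ^ k * M / (k.factorial : ℝ)) ^ ((1 : ℝ) / (k : ℝ)) *
            ((k * P.totalDegree : ℕ) : ℝ) ^ (s / (k : ℝ)) * q P :=
  statement4_general (q := hq.seminorm) hsub hspec (pderiv j) totalDegree_pow_eq hk hM.le hs h
end

section
/- Let ‖·‖₀ be a seminorm on ℂ[X], let m > 0 and let s ≥ 1 be an integer, and define q_{m,s}(P) = Σ_{r=0}^∞ ‖P^{(rs)}‖₀ / ((rs)!)^m. Suppose there exist constants A, B > 0 such that ‖P^{(j)}‖₀ ≤ A‖P‖₀ + B‖P^{(s)}‖₀ for every P ∈ ℂ[X] and every j ∈ {1,…,s}. Then for every t ∈ ℕ, every j ∈ {1,…,s} and every P ∈ ℂ[X] with deg P ≥ 1, q_{m,s}(P^{(st+j)}) ≤ (A + max(B,1)) · (deg P)^{s(t+1)m} · q_{m,s}(P).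 Consequently m_k(q_{m,s}) ≤ s·m·⌈k/s⌉ for every integer k ≥ 1. -/
open Polynomial Filter
open scoped ENNReal

/-- The `k`-th derivative `P^{(k)}` of a polynomial in one complex variable. -/
noncomputable def dIter (k : ℕ) (P : Polynomial ℂ) : Polynomial ℂ :=
  (fun Q : Polynomial ℂ => Polynomial.derivative Q)^[k] P

/-- The Markov exponent `m_k(q) ∈ [0,∞]` for a (semi)norm `q` on `ℂ[X]`: the infimum of the
set of `s > 0` such that `q(P^{(k)}) ≤ M (deg P)^s q(P)` for some `M > 0` and all `P` with
`deg P ≥ 1` (`sInf ∅ = ∞` in `ℝ≥0∞`). -/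
noncomputable def mkPoly (q : Polynomial ℂ → ℝ) (k : ℕ) : ℝ≥0∞ :=
  sInf (ENNReal.ofReal '' {s : ℝ | 0 < s ∧ ∃ M : ℝ, 0 < M ∧
    ∀ P : Polynomial ℂ, 1 ≤ P.natDegree →
      q (dIter k P) ≤ M * (P.natDegree : ℝ) ^ s * q P})

/-- The norm `q_{m,s}(P) = ∑_{r=0}^∞ ‖P^{(rs)}‖₀ / ((rs)!)^m` (the sum is finite, since
`P^{(rs)} = 0` once `rs > deg P`). -/
noncomputable def qms (q0 : Polynomial ℂ → ℝ) (m : ℝ) (s : ℕ) (P : Polynomial ℂ) : ℝ :=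
  ∑' r : ℕ, q0 (dIter (r * s) P) / ((r * s).factorial : ℝ) ^ m

/-- `q0` is a seminorm on `ℂ[X]`. -/
structure IsPolySeminorm (q0 : Polynomial ℂ → ℝ) : Prop where
  nonneg : ∀ P, 0 ≤ q0 P
  triangle : ∀ P Q, q0 (P + Q) ≤ q0 P + q0 Q
  homog : ∀ (c : ℂ) (P), q0 (c • P) = ‖c‖ * q0 P

/-!
Only the numbers `a k = ‖P^{(k)}‖₀` matter. They vanish for `k > n = deg P`, and for `k + l ≤ n`
we have `((k + l)!)^m ≤ n^{lm} (k!)^m`, since `(k + l)!` arises from `k!` by `l` factors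
that are at most `n`. Hence replacing `a` by `k ↦ a (k + st)` multiplies the sum
`∑ a (rs) / ((rs)!)^m` by at most `n^{stm}`. The hypothesis, applied to `P^{(rs + st)}`, bounds the
shift by `st + j` by the shifts by `st` and `s(t + 1)`.
-/

theorem hasFiniteSupport_of_forall_lt_eq_zero {ι M : Type*} [LinearOrder ι]
    [LocallyFiniteOrderBot ι] [Zero M] {f : ι → M} {n : ι} (hf : ∀ k, n < k → f k = 0) :
    f.HasFiniteSupport :=
  (Set.finite_Iic n).subset fun k hk => not_lt.1 fun hnk => hk (hf k hnk)

section FactorialSum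

/-- The weighted sum `∑_r a (rs) / ((rs)!)^m` of a sequence along the multiples of `s`; for
`a k = ‖P^{(k)}‖₀` this is `q_{m,s}(P)`. -/
noncomputable def factorialSum (m : ℝ) (s : ℕ) (a : ℕ → ℝ) : ℝ :=
  ∑' r : ℕ, a (r * s) / ((r * s).factorial : ℝ) ^ m

variable {m A B : ℝ} {s n : ℕ} {a b : ℕ → ℝ}

theorem summable_div_factorial_rpow (m : ℝ) (hs : 0 < s) (ha : a.HasFiniteSupport) :
    Summable fun r : ℕ => a (r * s) / ((r * s).factorial : ℝ) ^ m := by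
  have hinj : Function.Injective fun r : ℕ => r * s := mul_left_injective₀ hs.ne'
  simp only [div_eq_mul_inv]
  exact summable_of_hasFiniteSupport ((ha.fun_comp_of_injective hinj).mul_left _)

theorem factorialSum_nonneg (m : ℝ) (s : ℕ) (ha : ∀ k, 0 ≤ a k) : 0 ≤ factorialSum m s a :=
  tsum_nonneg fun _ => div_nonneg (ha _) (by positivity)

theorem factorialSum_const_mul (m : ℝ) (s : ℕ) (c : ℝ) (a : ℕ → ℝ) :
    factorialSum m s (fun k => c * a k) = c * factorialSum m s a := by
  simp only [factorialSum, mul_div_assoc, tsum_mul_left]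

theorem factorialSum_add (m : ℝ) (hs : 0 < s) (ha : a.HasFiniteSupport)
    (hb : b.HasFiniteSupport) :
    factorialSum m s (fun k => a k + b k) = factorialSum m s a + factorialSum m s b := by
  simp only [factorialSum, add_div]
  exact (summable_div_factorial_rpow m hs ha).tsum_add (summable_div_factorial_rpow m hs hb)

theorem factorialSum_mono (m : ℝ) (hs : 0 < s) (ha : a.HasFiniteSupport)
    (hb : b.HasFiniteSupport) (hab : ∀ k, a k ≤ b k) :
    factorialSum m s a ≤ factorialSum m s b :=
  (summable_div_factorial_rpow m hs ha).tsum_le_tsum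
    (fun _ => div_le_div_of_nonneg_right (hab _) (by positivity))
    (summable_div_factorial_rpow m hs hb)

theorem factorial_add_le_factorial_mul_pow (k l : ℕ) :
    (k + l).factorial ≤ k.factorial * (k + l) ^ l := by
  rw [← Nat.factorial_mul_ascFactorial]
  gcongr
  exact Nat.ascFactorial_le_pow_add k l

theorem factorial_add_rpow_le {k l : ℕ} (hm : 0 ≤ m) (hn : k + l ≤ n) :
    ((k + l).factorial : ℝ) ^ m ≤ (n : ℝ) ^ (l * m) * (k.factorial : ℝ) ^ m := by
  have hfactorial : ((k + l).factorial : ℝ) ≤ (n : ℝ) ^ l * k.factorial := by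
    have := (factorial_add_le_factorial_mul_pow k l).trans
      (Nat.mul_le_mul_left _ (Nat.pow_le_pow_left hn l))
    rw [mul_comm]
    exact_mod_cast this
  calc ((k + l).factorial : ℝ) ^ m ≤ ((n : ℝ) ^ l * k.factorial) ^ m :=
        Real.rpow_le_rpow (by positivity) hfactorial hm
    _ = (n : ℝ) ^ (l * m) * (k.factorial : ℝ) ^ m := by
        rw [Real.mul_rpow (by positivity) (by positivity), Real.rpow_natCast_mul (by positivity)]

theorem div_factorial_rpow_le {x : ℝ} {k l : ℕ} (hm : 0 ≤ m) (hx : 0 ≤ x) (hn : k + l ≤ n) :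
    x / (k.factorial : ℝ) ^ m ≤ (n : ℝ) ^ (l * m) * (x / ((k + l).factorial : ℝ) ^ m) := by
  rw [← mul_div_assoc, div_le_div_iff₀ (by positivity) (by positivity), mul_comm _ x, mul_assoc]
  exact mul_le_mul_of_nonneg_left (factorial_add_rpow_le hm hn) hx

theorem factorialSum_shift_le (hm : 0 ≤ m) (hs : 0 < s) (ha : ∀ k, 0 ≤ a k)
    (hn : ∀ k, n < k → a k = 0) (t : ℕ) :
    factorialSum m s (fun k => a (k + s * t)) ≤ (n : ℝ) ^ (s * t * m) * factorialSum m s a := by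
  have hfin := hasFiniteSupport_of_forall_lt_eq_zero hn
  have hsum := summable_div_factorial_rpow m hs hfin
  have hsum_shift :=
    summable_div_factorial_rpow m hs (hfin.fun_comp_of_injective (add_left_injective (s * t)))
  have htail : Function.Injective fun r : ℕ => r + t := add_left_injective t
  have hterm (r : ℕ) : a (r * s + s * t) / ((r * s).factorial : ℝ) ^ m ≤
      (n : ℝ) ^ (s * t * m) * (a ((r + t) * s) / (((r + t) * s).factorial : ℝ) ^ m) := by
    rw [add_mul, mul_comm t s]
    rcases lt_or_ge n (r * s + s * t) with hlt | hle
    · simp only [hn _ hlt, zero_div, mul_zero, le_refl]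
    · exact_mod_cast div_factorial_rpow_le hm (ha _) hle
  calc factorialSum m s (fun k => a (k + s * t))
      ≤ ∑' r : ℕ, (n : ℝ) ^ (s * t * m) *
          (a ((r + t) * s) / (((r + t) * s).factorial : ℝ) ^ m) :=
        hsum_shift.tsum_le_tsum hterm ((hsum.comp_injective htail).mul_left _)
    _ = (n : ℝ) ^ (s * t * m) *
          ∑' r : ℕ, a ((r + t) * s) / (((r + t) * s).factorial : ℝ) ^ m := tsum_mul_left
    _ ≤ (n : ℝ) ^ (s * t * m) * factorialSum m s a := by
        gcongr
        exact tsum_comp_le_tsum_of_inj hsum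
          (fun r => div_nonneg (ha (r * s)) (by positivity)) htail

theorem factorialSum_shift_add_le (hm : 0 ≤ m) (hs : 0 < s) (hA : 0 ≤ A) (hB : 0 ≤ B)
    (ha : ∀ k, 0 ≤ a k) (hn : ∀ k, n < k → a k = 0) (hn1 : 1 ≤ n) {j : ℕ}
    (haj : ∀ k, a (k + j) ≤ A * a k + B * a (k + s)) (t : ℕ) :
    factorialSum m s (fun k => a (k + (s * t + j))) ≤
      (A + B) * (n : ℝ) ^ (s * (t + 1) * m) * factorialSum m s a := by
  have hfin := hasFiniteSupport_of_forall_lt_eq_zero hn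
  have hfin_shift (l : ℕ) : (fun k => a (k + l)).HasFiniteSupport :=
    hfin.fun_comp_of_injective (add_left_injective l)
  have hfinA : (fun k => A * a (k + s * t)).HasFiniteSupport := (hfin_shift _).mul_right _
  have hfinB : (fun k => B * a (k + s * (t + 1))).HasFiniteSupport := (hfin_shift _).mul_right _
  have hinterp (k : ℕ) :
      a (k + (s * t + j)) ≤ A * a (k + s * t) + B * a (k + s * (t + 1)) := by
    simpa only [mul_add_one, add_assoc] using haj (k + s * t)
  have hshift : factorialSum m s (fun k => a (k + s * t)) ≤
      (n : ℝ) ^ (s * (t + 1) * m) * factorialSum m s a := by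
    refine (factorialSum_shift_le hm hs ha hn t).trans ?_
    have hsum_nonneg := factorialSum_nonneg m s ha
    gcongr
    · exact_mod_cast hn1
    · linarith
  calc factorialSum m s (fun k => a (k + (s * t + j)))
      ≤ factorialSum m s (fun k => A * a (k + s * t) + B * a (k + s * (t + 1))) :=
        factorialSum_mono m hs (hfin_shift _) (Function.HasFiniteSupport.add hfinA hfinB) hinterp
    _ = A * factorialSum m s (fun k => a (k + s * t)) +
          B * factorialSum m s (fun k => a (k + s * (t + 1))) := by
        rw [factorialSum_add m hs hfinA hfinB, factorialSum_const_mul, factorialSum_const_mul]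
    _ ≤ A * ((n : ℝ) ^ (s * (t + 1) * m) * factorialSum m s a) +
          B * ((n : ℝ) ^ (s * (t + 1) * m) * factorialSum m s a) := by
        gcongr
        exact_mod_cast factorialSum_shift_le hm hs ha hn (t + 1)
    _ = (A + B) * (n : ℝ) ^ (s * (t + 1) * m) * factorialSum m s a := by ring

end FactorialSum

theorem exists_eq_mul_add_and_ceil_div_eq {K : Type*} [Field K] [LinearOrder K]
    [IsStrictOrderedRing K] [FloorSemiring K] {k s : ℕ} (hk : 0 < k) (hs : 0 < s) :
    ∃ t j : ℕ, 1 ≤ j ∧ j ≤ s ∧ k = s * t + j ∧ ⌈(k : K) / s⌉₊ = t + 1 := by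
  have hs' : (0 : K) < s := Nat.cast_pos.2 hs
  obtain ⟨t, ht⟩ : ∃ t, ⌈(k : K) / s⌉₊ = t + 1 :=
    Nat.exists_eq_succ_of_ne_zero (Nat.ceil_pos.2 (by positivity)).ne'
  obtain ⟨hlt, hle⟩ := (Nat.ceil_eq_iff t.succ_ne_zero).1 ht
  rw [Nat.succ_sub_one, lt_div_iff₀' hs'] at hlt
  rw [div_le_iff₀' hs'] at hle
  have hlt' : s * t < k := by exact_mod_cast hlt
  have hle' : k ≤ s * t + s := by exact_mod_cast hle
  exact ⟨t, k - s * t, by lia, by lia, by lia, ht⟩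

section Polynomial

variable {R : Type*} [Semiring R]

/-- The functional `q_{m,s}` over an arbitrary coefficient semiring; it is `qms` for `R = ℂ`. -/
noncomputable def derivativeSum (q0 : R[X] → ℝ) (m : ℝ) (s : ℕ) (P : R[X]) : ℝ :=
  factorialSum m s fun k => q0 (derivative^[k] P)

/-- The Markov exponent `m_k(q)` over an arbitrary coefficient semiring; it is `mkPoly` for
`R = ℂ`. -/
noncomputable def markovExponent (q : R[X] → ℝ) (k : ℕ) : ℝ≥0∞ :=
  sInf (ENNReal.ofReal '' {σ : ℝ | 0 < σ ∧ ∃ M : ℝ, 0 < M ∧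
    ∀ P : R[X], 1 ≤ P.natDegree → q (derivative^[k] P) ≤ M * (P.natDegree : ℝ) ^ σ * q P})

variable {q q0 : R[X] → ℝ} {m A B : ℝ} {s : ℕ}

theorem markovExponent_le {k : ℕ} {σ M : ℝ} (hσ : 0 < σ) (hM : 0 < M)
    (hq : ∀ P : R[X], 1 ≤ P.natDegree →
      q (derivative^[k] P) ≤ M * (P.natDegree : ℝ) ^ σ * q P) :
    markovExponent q k ≤ ENNReal.ofReal σ :=
  sInf_le ⟨σ, ⟨hσ, M, hM, hq⟩, rfl⟩

theorem derivativeSum_iterate_derivative_le (hq0 : ∀ P, 0 ≤ q0 P) (hq0_zero : q0 0 = 0)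
    (hm : 0 ≤ m) (hs : 0 < s) (hA : 0 ≤ A) (hB : 0 ≤ B) {j : ℕ}
    (hj : ∀ P, q0 (derivative^[j] P) ≤ A * q0 P + B * q0 (derivative^[s] P))
    (t : ℕ) {P : R[X]} (hP : 1 ≤ P.natDegree) :
    derivativeSum q0 m s (derivative^[s * t + j] P) ≤
      (A + B) * (P.natDegree : ℝ) ^ (s * (t + 1) * m) * derivativeSum q0 m s P := by
  have hvanish (k : ℕ) (hk : P.natDegree < k) : q0 (derivative^[k] P) = 0 := by
    rw [iterate_derivative_eq_zero hk, hq0_zero]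
  have hinterp (k : ℕ) : q0 (derivative^[k + j] P) ≤
      A * q0 (derivative^[k] P) + B * q0 (derivative^[k + s] P) := by
    simpa only [← Function.iterate_add_apply, add_comm] using hj (derivative^[k] P)
  simpa only [derivativeSum, ← Function.iterate_add_apply] using
    factorialSum_shift_add_le hm hs hA hB (fun _ => hq0 _) hvanish hP hinterp t

end Polynomial

theorem statement7_general {R : Type*} [Semiring R] {q0 : R[X] → ℝ} (hq0 : ∀ P, 0 ≤ q0 P)
    (hq0_zero : q0 0 = 0) {m : ℝ} (hm : 0 < m) {s : ℕ} (hs : 1 ≤ s) {A B : ℝ} (hA : 0 ≤ A)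
    (hAB : ∀ (P : R[X]) (j : ℕ), 1 ≤ j → j ≤ s →
      q0 (derivative^[j] P) ≤ A * q0 P + B * q0 (derivative^[s] P)) :
    (∀ t j : ℕ, 1 ≤ j → j ≤ s → ∀ P : R[X], 1 ≤ P.natDegree →
      derivativeSum q0 m s (derivative^[s * t + j] P) ≤
        (A + max B 1) * (P.natDegree : ℝ) ^ ((s : ℝ) * ((t : ℝ) + 1) * m) *
          derivativeSum q0 m s P) ∧
    ∀ k : ℕ, 1 ≤ k →
      markovExponent (derivativeSum q0 m s) k ≤
        ENNReal.ofReal ((s : ℝ) * m * (⌈(k : ℝ) / (s : ℝ)⌉₊ : ℝ)) := by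
  have hmax : 0 < max B 1 := lt_max_of_lt_right one_pos
  have hAmax (P : R[X]) (j : ℕ) (hj1 : 1 ≤ j) (hjs : j ≤ s) :
      q0 (derivative^[j] P) ≤ A * q0 P + max B 1 * q0 (derivative^[s] P) :=
    (hAB P j hj1 hjs).trans <| by gcongr; exacts [hq0 _, le_max_left B 1]
  have hbound (t j : ℕ) (hj1 : 1 ≤ j) (hjs : j ≤ s) (P : R[X]) (hP : 1 ≤ P.natDegree) :=
    derivativeSum_iterate_derivative_le hq0 hq0_zero hm.le hs hA hmax.le
      (fun Q => hAmax Q j hj1 hjs) t hP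
  refine ⟨hbound, fun k hk => ?_⟩
  obtain ⟨t, j, hj1, hjs, rfl, hceil⟩ := exists_eq_mul_add_and_ceil_div_eq (K := ℝ) hk hs
  rw [hceil, Nat.cast_add_one, mul_right_comm]
  exact markovExponent_le (by positivity) (by positivity) (hbound t j hj1 hjs)

theorem IsPolySeminorm.apply_zero {q0 : ℂ[X] → ℝ} (hq0 : IsPolySeminorm q0) : q0 0 = 0 := by
  simpa only [zero_smul, norm_zero, zero_mul] using hq0.homog 0 0

/-- Let `‖·‖₀` be a seminorm on `ℂ[X]`, `m > 0`, `s ≥ 1` an integer, and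
suppose `‖P^{(j)}‖₀ ≤ A ‖P‖₀ + B ‖P^{(s)}‖₀` for all `P` and `j ∈ {1,…,s}`. Then for all
`t ∈ ℕ`, `j ∈ {1,…,s}` and `P` with `deg P ≥ 1`,
`q_{m,s}(P^{(st+j)}) ≤ (A + max(B,1)) (deg P)^{s(t+1)m} q_{m,s}(P)`;
consequently `m_k(q_{m,s}) ≤ s m ⌈k/s⌉` for every `k ≥ 1`. -/
theorem statement7 (q0 : Polynomial ℂ → ℝ) (hq0 : IsPolySeminorm q0)
    (m : ℝ) (hm : 0 < m) (s : ℕ) (hs : 1 ≤ s)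
    (A B : ℝ) (hA : 0 < A) (hB : 0 < B)
    (hAB : ∀ (P : Polynomial ℂ) (j : ℕ), 1 ≤ j → j ≤ s →
      q0 (dIter j P) ≤ A * q0 P + B * q0 (dIter s P)) :
    (∀ (t j : ℕ), 1 ≤ j → j ≤ s → ∀ P : Polynomial ℂ, 1 ≤ P.natDegree →
      qms q0 m s (dIter (s * t + j) P) ≤
        (A + max B 1) * (P.natDegree : ℝ) ^ ((s : ℝ) * ((t : ℝ) + 1) * m) * qms q0 m s P) ∧
    ∀ k : ℕ, 1 ≤ k →
      mkPoly (qms q0 m s) k ≤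
        ENNReal.ofReal ((s : ℝ) * m * (⌈(k : ℝ) / (s : ℝ)⌉₊ : ℝ)) :=
  statement7_general hq0.nonneg hq0.apply_zero hm hs hA.le hAB
end

section
/- Let s ≥ 1 be an integer and m > 0, and let q_{m,s} be the norm on ℂ[X] defined by q_{m,s}(P) = Σ_{r=0}^∞ ‖P^{(rs)}‖₀/((rs)!)^m, where ‖P‖₀ = Σ_{l=0}^{s-1} |P^{(l)}(0)|/l!. Then for every integer k ≥ 1, m_k(q_{m,s}) = s·m·⌈k/s⌉. Consequently the asymptotic exponent satisfies m*(q_{m,s}) = m while the Markov exponent satisfies m(q_{m,s}) = s·m; in particular, for s ≥ 2 the asymptotic exponent is strictly smaller than the Markov exponent. -/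
open Polynomial Filter
open scoped ENNReal

/-- The seminorm `‖P‖₀ = ∑_{l=0}^{s-1} |P^{(l)}(0)| / l!` on `ℂ[X]`. -/
noncomputable def q0s (s : ℕ) (P : Polynomial ℂ) : ℝ :=
  ∑ l ∈ Finset.range s, ‖(dIter l P).eval 0‖ / (l.factorial : ℝ)

/-!
For positive weights `a`, put `‖P‖_a = ∑ⱼ |P^{(j)}(0)| / a j`. Differentiation shifts the sequence
`P^{(j)}(0)`, and `X ^ n` has a single nonzero entry there, so a Markov inequality
`‖P^{(k)}‖_a ≤ M (deg P)^t ‖P‖_a` is equivalent to `a (j + k) ≤ M (j + k)^t a j` for all `j`. The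
exponent `m_k` is therefore the polynomial order of growth of the ratios `a (j + k) / a j`.

Writing `j = r s + l` with `l < s` identifies `q_{m,s}` with `‖·‖_a` for `a j = l! ((r s)!)^m`. Up
to bounded factors `a` only sees the block `r` of `j`. A shift by `k` crosses at most `c = ⌈k / s⌉`
blocks, and it crosses exactly `c` of them when it ends at the start of a block. Each block crossed
multiplies `a` by a quantity of order `j^{s m}`, whence `m_k = s m c`.
-/

section

open scoped Nat

theorem dIter_dIter (j k : ℕ) (P : ℂ[X]) : dIter j (dIter k P) = dIter (j + k) P :=
  (Function.iterate_add_apply _ j k P).symm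

theorem dIter_eq_zero {k : ℕ} {P : ℂ[X]} (hk : P.natDegree < k) : dIter k P = 0 :=
  iterate_derivative_eq_zero hk

theorem eval_zero_dIter (j : ℕ) (P : ℂ[X]) : (dIter j P).eval 0 = j ! * P.coeff j := by
  change (derivative^[j] P).eval 0 = _
  simp [← coeff_zero_eq_eval_zero, coeff_iterate_derivative, Nat.descFactorial_self]

/-- The weighted `ℓ¹` norm `∑ⱼ |P^{(j)}(0)| / a j` of the derivatives of `P` at the origin. Dividing
by the weights, rather than multiplying, makes them comparable to factorials. -/
noncomputable def taylorNorm (a : ℕ → ℝ) (P : ℂ[X]) : ℝ :=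
  ∑' j, ‖(dIter j P).eval 0‖ / a j

theorem summable_taylorNorm (a : ℕ → ℝ) (P : ℂ[X]) :
    Summable fun j => ‖(dIter j P).eval 0‖ / a j :=
  summable_of_ne_finset_zero (s := Finset.range (P.natDegree + 1)) fun j hj => by
    rw [dIter_eq_zero (by simpa using hj)]
    simp

theorem taylorNorm_dIter (a : ℕ → ℝ) (k : ℕ) (P : ℂ[X]) :
    taylorNorm a (dIter k P) = ∑' j, ‖(dIter (j + k) P).eval 0‖ / a j := by
  simp only [taylorNorm, dIter_dIter]

theorem taylorNorm_dIter_X_pow (a : ℕ → ℝ) (j k : ℕ) :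
    taylorNorm a (dIter k (X ^ (j + k))) = (j + k)! / a j := by
  rw [taylorNorm_dIter, tsum_eq_single j]
  · simp [eval_zero_dIter]
  · intro i hi
    simp [eval_zero_dIter, coeff_X_pow, hi]

theorem taylorNorm_X_pow (a : ℕ → ℝ) (n : ℕ) : taylorNorm a (X ^ n) = n ! / a n :=
  taylorNorm_dIter_X_pow a n 0

theorem taylorNorm_dIter_le {a : ℕ → ℝ} (ha : ∀ j, 0 < a j) {k : ℕ} {C : ℝ} (hC : 0 ≤ C)
    {P : ℂ[X]} (h : ∀ j, j + k ≤ P.natDegree → a (j + k) ≤ C * a j) :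
    taylorNorm a (dIter k P) ≤ C * taylorNorm a P := by
  have hsum := (summable_taylorNorm a P).mul_left C
  have hterm : ∀ j, ‖(dIter (j + k) P).eval 0‖ / a j ≤
      C * (‖(dIter (j + k) P).eval 0‖ / a (j + k)) := by
    intro j
    rcases le_or_gt (j + k) P.natDegree with hj | hj
    · rw [mul_div_left_comm]
      refine mul_le_mul_of_nonneg_left ?_ (norm_nonneg _)
      rw [inv_eq_one_div, div_le_div_iff₀ (ha j) (ha (j + k)), one_mul]
      exact h j hj
    · simp [dIter_eq_zero hj]
  have hnonneg : ∀ j, 0 ≤ C * (‖(dIter j P).eval 0‖ / a j) := fun j =>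
    mul_nonneg hC (div_nonneg (norm_nonneg _) (ha j).le)
  have hshift := summable_taylorNorm a (dIter k P)
  simp only [dIter_dIter] at hshift
  calc taylorNorm a (dIter k P)
      = ∑' j, ‖(dIter (j + k) P).eval 0‖ / a j := taylorNorm_dIter a k P
    _ ≤ ∑' j, C * (‖(dIter (j + k) P).eval 0‖ / a (j + k)) :=
        hshift.tsum_le_tsum hterm (hsum.comp_injective (add_left_injective k))
    _ ≤ ∑' j, C * (‖(dIter j P).eval 0‖ / a j) :=
        tsum_comp_le_tsum_of_inj hsum hnonneg (add_left_injective k)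
    _ = C * taylorNorm a P := tsum_mul_left

theorem taylorNorm_markov_iff {a : ℕ → ℝ} (ha : ∀ j, 0 < a j) {k : ℕ} (hk : 0 < k) {t M : ℝ}
    (ht : 0 ≤ t) (hM : 0 ≤ M) :
    (∀ P : ℂ[X], 1 ≤ P.natDegree →
      taylorNorm a (dIter k P) ≤ M * (P.natDegree : ℝ) ^ t * taylorNorm a P) ↔
    ∀ j, a (j + k) ≤ M * ((j + k : ℕ) : ℝ) ^ t * a j := by
  constructor
  · intro h j
    have hX := h (X ^ (j + k)) (by rw [natDegree_X_pow]; lia)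
    rw [natDegree_X_pow, taylorNorm_dIter_X_pow, taylorNorm_X_pow, mul_div_left_comm,
      div_eq_mul_inv] at hX
    have hinv := le_of_mul_le_mul_left hX (by positivity)
    rwa [inv_eq_one_div, div_le_div_iff₀ (ha j) (ha (j + k)), one_mul] at hinv
  · intro h P _
    refine taylorNorm_dIter_le ha (by positivity) fun j hj => (h j).trans ?_
    have := (ha j).le
    gcongr

theorem le_of_frequently_rpow_le_mul_rpow {T t C : ℝ}
    (h : ∃ᶠ n : ℕ in atTop, (n : ℝ) ^ T ≤ C * (n : ℝ) ^ t) : T ≤ t := by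
  by_contra! hlt
  have hlim : Tendsto (fun n : ℕ => (n : ℝ) ^ (T - t)) atTop atTop :=
    (tendsto_rpow_atTop (sub_pos.mpr hlt)).comp tendsto_natCast_atTop_atTop
  obtain ⟨n, hle, hgt, hn⟩ :=
    (h.and_eventually ((hlim.eventually_gt_atTop C).and (eventually_gt_atTop 0))).exists
  have hn' : (0 : ℝ) < n := mod_cast hn
  rw [Real.rpow_sub hn', lt_div_iff₀ (Real.rpow_pos_of_pos hn' t)] at hgt
  exact hgt.not_ge hle

theorem mkPoly_taylorNorm_eq_ofReal {a : ℕ → ℝ} (ha : ∀ j, 0 < a j) {k : ℕ} (hk : 0 < k)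
    {T C D : ℝ} (hT : 0 < T) (hC : 0 < C) (hD : 0 ≤ D)
    (hupper : ∀ j, a (j + k) ≤ C * ((j + k : ℕ) : ℝ) ^ T * a j)
    (hlower : ∃ᶠ j in atTop, ((j + k : ℕ) : ℝ) ^ T * a j ≤ D * a (j + k)) :
    mkPoly (taylorNorm a) k = ENNReal.ofReal T := by
  apply le_antisymm
  · exact sInf_le ⟨T, ⟨hT, C, hC, (taylorNorm_markov_iff ha hk hT.le hC.le).2 hupper⟩, rfl⟩
  · apply le_sInf
    rintro _ ⟨t, ⟨ht, M, hM, hmarkov⟩, rfl⟩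
    rw [taylorNorm_markov_iff ha hk ht.le hM.le] at hmarkov
    have hpow : ∃ᶠ j in atTop,
        ((j + k : ℕ) : ℝ) ^ T ≤ D * M * ((j + k : ℕ) : ℝ) ^ t :=
      hlower.mono fun j hj => le_of_mul_le_mul_right
        (calc ((j + k : ℕ) : ℝ) ^ T * a j
            ≤ D * a (j + k) := hj
          _ ≤ D * (M * ((j + k : ℕ) : ℝ) ^ t * a j) := by gcongr; exact hmarkov j
          _ = D * M * ((j + k : ℕ) : ℝ) ^ t * a j := by ring) (ha j)
    exact ENNReal.ofReal_le_ofReal <|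
      le_of_frequently_rpow_le_mul_rpow <| (tendsto_add_atTop_nat k).frequently hpow

/-- The weight `l! * ((r * s)!) ^ m` of the index `j = r * s + l`, `l < s`, for which
`taylorNorm` is the norm `q_{m,s}`. -/
noncomputable def blockFactorial (m : ℝ) (s j : ℕ) : ℝ :=
  (j % s)! * ((j / s * s)! : ℝ) ^ m

theorem blockFactorial_pos (m : ℝ) (s j : ℕ) : 0 < blockFactorial m s j := by
  unfold blockFactorial
  positivity

theorem blockFactorial_mul_add (m : ℝ) {s l : ℕ} (hl : l < s) (r : ℕ) :
    blockFactorial m s (r * s + l) = l ! * ((r * s)! : ℝ) ^ m := by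
  have hdiv : (r * s + l) / s = r :=
    Nat.div_eq_of_lt_le (by lia) (by rw [add_mul]; lia)
  rw [blockFactorial, Nat.mul_add_mod_of_lt hl, hdiv]

theorem blockFactorial_mul (m : ℝ) {s : ℕ} (hs : 0 < s) (r : ℕ) :
    blockFactorial m s (r * s) = ((r * s)! : ℝ) ^ m := by
  simpa using blockFactorial_mul_add m hs r

theorem qms_q0s_eq_taylorNorm (m : ℝ) {s : ℕ} (hs : 0 < s) :
    qms (q0s s) m s = taylorNorm (blockFactorial m s) := by
  have : NeZero s := ⟨hs.ne'⟩
  ext P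
  let e := (Nat.divModEquiv s).symm
  have hsum := (e.summable_iff).2 (summable_taylorNorm (blockFactorial m s) P)
  rw [taylorNorm, ← e.tsum_eq]
  refine Eq.trans ?_ hsum.tsum_prod.symm
  refine tsum_congr fun r => ?_
  rw [q0s, Finset.sum_div, Finset.sum_range, tsum_fintype]
  refine Finset.sum_congr rfl fun l _ => ?_
  change _ = ‖(dIter (r * s + l) P).eval 0‖ / blockFactorial m s (r * s + l)
  rw [dIter_dIter, blockFactorial_mul_add m l.isLt, div_div, add_comm]

theorem factorial_add_le_factorial_mul_pow_s10 {a e d n : ℕ} (hed : e ≤ d) (hn : a + e ≤ n)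
    (hn_pos : 0 < n) : (a + e)! ≤ a ! * n ^ d := by
  rw [← Nat.factorial_mul_ascFactorial]
  gcongr
  calc (a + 1).ascFactorial e ≤ (a + e) ^ e := Nat.ascFactorial_le_pow_add a e
    _ ≤ n ^ e := by gcongr
    _ ≤ n ^ d := Nat.pow_le_pow_right hn_pos hed

theorem pow_mul_factorial_le {n b d C : ℕ} (hn : n ≤ C * (b + 1)) :
    n ^ d * b ! ≤ C ^ d * (b + d)! := by
  calc n ^ d * b ! ≤ (C * (b + 1)) ^ d * b ! := by gcongr
    _ = C ^ d * (b ! * (b + 1) ^ d) := by rw [mul_pow]; ring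
    _ ≤ C ^ d * (b + d)! := by gcongr; exact Nat.factorial_mul_pow_le_factorial

theorem blockFactorial_add_le {m : ℝ} (hm : 0 ≤ m) {s : ℕ} (hs : 0 < s) {k c : ℕ}
    (hkc : k ≤ c * s) {j : ℕ} (hjk : 0 < j + k) :
    blockFactorial m s (j + k) ≤
      s ! * ((j + k : ℕ) : ℝ) ^ ((c * s : ℕ) * m) * blockFactorial m s j := by
  obtain ⟨d, hd⟩ : ∃ d, (j + k) / s = j / s + d :=
    Nat.exists_eq_add_of_le (Nat.div_le_div_right (Nat.le_add_right j k))
  have hdc : d ≤ c := by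
    have : (j + k) / s ≤ j / s + c := by
      rw [← Nat.add_mul_div_right j c hs]
      gcongr
    lia
  have hfac : ((j + k) / s * s)! ≤ (j / s * s)! * (j + k) ^ (c * s) := by
    rw [hd, add_mul]
    refine factorial_add_le_factorial_mul_pow_s10 (by gcongr) ?_ hjk
    rw [← add_mul, ← hd]
    exact Nat.div_mul_le_self _ _
  have hmod : (j + k) % s ≤ s := (Nat.mod_lt _ hs).le
  have hone : (1 : ℝ) ≤ (j % s)! := mod_cast Nat.one_le_iff_ne_zero.2 (Nat.factorial_ne_zero _)
  rw [Real.rpow_natCast_mul (by positivity), blockFactorial, blockFactorial]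
  calc ((j + k) % s)! * (((j + k) / s * s)! : ℝ) ^ m
      ≤ s ! * ((j / s * s)! * ((j + k : ℕ) : ℝ) ^ (c * s)) ^ m := by
        gcongr
        exact_mod_cast hfac
    _ = s ! * (((j + k : ℕ) : ℝ) ^ (c * s)) ^ m * (1 * ((j / s * s)! : ℝ) ^ m) := by
        rw [Real.mul_rpow (by positivity) (by positivity)]
        ring
    _ ≤ s ! * (((j + k : ℕ) : ℝ) ^ (c * s)) ^ m * ((j % s)! * ((j / s * s)! : ℝ) ^ m) := by
        gcongr

theorem rpow_mul_blockFactorial_le {m : ℝ} (hm : 0 ≤ m) {s l c : ℕ} (hl : l < s) (hc : 0 < c)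
    (r : ℕ) :
    (((r + c) * s : ℕ) : ℝ) ^ ((c * s : ℕ) * m) * blockFactorial m s (r * s + l) ≤
      s ! * ((c * s : ℕ) : ℝ) ^ ((c * s : ℕ) * m) * blockFactorial m s ((r + c) * s) := by
  have hbase : (r + c) * s ≤ c * s * (r * s + 1) := by
    have : 1 * r ≤ c * s * r := by gcongr; exact Nat.mul_pos hc (by lia)
    calc (r + c) * s ≤ (c * s * r + c) * s := by gcongr; lia
      _ = c * s * (r * s + 1) := by ring
  have hfac : ((r + c) * s) ^ (c * s) * (r * s)! ≤ (c * s) ^ (c * s) * ((r + c) * s)! := by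
    simpa only [add_mul] using pow_mul_factorial_le (d := c * s) hbase
  rw [blockFactorial_mul_add m hl, blockFactorial_mul m (by lia),
    Real.rpow_natCast_mul (by positivity), Real.rpow_natCast_mul (by positivity)]
  calc ((((r + c) * s : ℕ) : ℝ) ^ (c * s)) ^ m * (l ! * ((r * s)! : ℝ) ^ m)
      = l ! * ((((r + c) * s : ℕ) : ℝ) ^ (c * s) * (r * s)!) ^ m := by
        rw [Real.mul_rpow (by positivity) (by positivity)]
        ring
    _ ≤ s ! * (((c * s : ℕ) : ℝ) ^ (c * s) * ((r + c) * s)!) ^ m := by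
        gcongr ?_ * ?_ ^ m
        · exact_mod_cast Nat.factorial_le hl.le
        · exact_mod_cast hfac
    _ = s ! * (((c * s : ℕ) : ℝ) ^ (c * s)) ^ m * (((r + c) * s)! : ℝ) ^ m := by
        rw [Real.mul_rpow (by positivity) (by positivity)]
        ring

theorem mkPoly_qms_q0s_of_mul_bounds {m : ℝ} (hm : 0 < m) {s k c : ℕ} (hk : 0 < k)
    (hkc : k ≤ c * s) (hck : c * s < k + s) :
    mkPoly (qms (q0s s) m s) k = ENNReal.ofReal ((c * s : ℕ) * m) := by
  have hs : 0 < s := by lia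
  have hcs : 0 < c * s := by lia
  rw [qms_q0s_eq_taylorNorm m hs]
  refine mkPoly_taylorNorm_eq_ofReal (C := s !)
    (D := s ! * ((c * s : ℕ) : ℝ) ^ ((c * s : ℕ) * m)) (blockFactorial_pos m s) hk
    (by positivity) (by positivity) (by positivity)
    (fun j => blockFactorial_add_le hm.le hs hkc (by lia)) ?_
  -- The extremal shifts `r * s + (c * s - k) ↦ (r + c) * s` are those ending at a block start.
  refine frequently_atTop.2 fun N => ⟨N * s + (c * s - k), ?_, ?_⟩
  · exact (Nat.le_mul_of_pos_right N hs).trans (Nat.le_add_right _ _)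
  · have hend : N * s + (c * s - k) + k = (N + c) * s := by
      rw [add_mul]
      lia
    rw [hend]
    exact rpow_mul_blockFactorial_le hm.le (by lia) (Nat.pos_of_mul_pos_right hcs) N

theorem mkPoly_qms_q0s {m : ℝ} (hm : 0 < m) {s : ℕ} (hs : 0 < s) {k : ℕ} (hk : 0 < k) :
    mkPoly (qms (q0s s) m s) k = ENNReal.ofReal (s * m * ⌈(k : ℝ) / s⌉₊) := by
  have hs' : (0 : ℝ) < s := mod_cast hs
  have hle : (k : ℝ) ≤ ⌈(k : ℝ) / s⌉₊ * s := (div_le_iff₀ hs').1 (Nat.le_ceil _)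
  have hlt : (⌈(k : ℝ) / s⌉₊ : ℝ) * s < k + s := by
    calc (⌈(k : ℝ) / s⌉₊ : ℝ) * s < (k / s + 1) * s := by
          gcongr
          exact Nat.ceil_lt_add_one (by positivity)
      _ = k + s := by field_simp
  rw [mkPoly_qms_q0s_of_mul_bounds hm hk (mod_cast hle) (mod_cast hlt)]
  push_cast
  ring_nf

theorem mkPoly_qms_q0s_one {m : ℝ} (hm : 0 < m) {s : ℕ} (hs : 0 < s) :
    mkPoly (qms (q0s s) m s) 1 = ENNReal.ofReal (s * m) := by
  simpa using mkPoly_qms_q0s_of_mul_bounds (c := 1) hm one_pos (by lia) (by lia)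

theorem tendsto_mkPoly_qms_q0s_div {m : ℝ} (hm : 0 < m) {s : ℕ} (hs : 0 < s) :
    Tendsto (fun k : ℕ => mkPoly (qms (q0s s) m s) k / (k : ℝ≥0∞)) atTop
      (nhds (ENNReal.ofReal m)) := by
  have hs' : (0 : ℝ) < s := mod_cast hs
  have hceil : Tendsto (fun k : ℕ => (⌈(s : ℝ)⁻¹ * k⌉₊ : ℝ) / k) atTop (nhds (s : ℝ)⁻¹) :=
    (tendsto_nat_ceil_mul_div_atTop (by positivity)).comp tendsto_natCast_atTop_atTop
  have hreal : Tendsto (fun k : ℕ => s * m * ((⌈(s : ℝ)⁻¹ * k⌉₊ : ℝ) / k)) atTop (nhds m) := by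
    simpa [mul_right_comm _ m, hs'.ne'] using hceil.const_mul (s * m)
  refine (ENNReal.tendsto_ofReal hreal).congr' ?_
  filter_upwards [eventually_gt_atTop 0] with k hk
  rw [mkPoly_qms_q0s hm hs hk, ← mul_div_assoc, ENNReal.ofReal_div_of_pos (mod_cast hk),
    ENNReal.ofReal_natCast, inv_mul_eq_div]

end

/-- For the norm `q_{m,s}` built from `‖P‖₀ = ∑_{l=0}^{s-1} |P^{(l)}(0)|/l!`
(`s ≥ 1` an integer, `m > 0`): `m_k(q_{m,s}) = s·m·⌈k/s⌉` for every `k ≥ 1`; consequently the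
asymptotic exponent is `m*(q_{m,s}) = m` while the Markov exponent is `m(q_{m,s}) = s·m`;
in particular for `s ≥ 2` the asymptotic exponent is strictly smaller than the Markov
exponent. -/
theorem statement10 (s : ℕ) (hs : 1 ≤ s) (m : ℝ) (hm : 0 < m) :
    (∀ k : ℕ, 1 ≤ k →
      mkPoly (qms (q0s s) m s) k =
        ENNReal.ofReal ((s : ℝ) * m * (⌈(k : ℝ) / (s : ℝ)⌉₊ : ℝ))) ∧
    Filter.atTop.limsup (fun k : ℕ => mkPoly (qms (q0s s) m s) k / (k : ℝ≥0∞)) =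
        ENNReal.ofReal m ∧
    mkPoly (qms (q0s s) m s) 1 = ENNReal.ofReal ((s : ℝ) * m) ∧
    (2 ≤ s →
      Filter.atTop.limsup (fun k : ℕ => mkPoly (qms (q0s s) m s) k / (k : ℝ≥0∞)) <
        mkPoly (qms (q0s s) m s) 1) := by
  have hlimsup := (tendsto_mkPoly_qms_q0s_div hm hs).limsup_eq
  have hone := mkPoly_qms_q0s_one hm hs
  refine ⟨fun k hk => mkPoly_qms_q0s hm hs hk, hlimsup, hone, fun h2 => ?_⟩
  rw [hlimsup, hone, ENNReal.ofReal_lt_ofReal_iff (by positivity)]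
  exact lt_mul_of_one_lt_left hm (mod_cast h2)
end
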